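/- In the coordinate system Λ ⊕ H for L, writing elements as (λ; α, β), let Ψ be the set of roots of the form r = (λ; 1, θ(−3 − |λ|²)/6 + β), where λ ∈ Λ and β ∈ ½ℤ is chosen with 2β + 1 ≡ |λ|² (mod 2) so that the last entry lies in ℰ. Then Ψ is a connected set of roots. -/

import Mathlib

noncomputable section

open ComplexConjugate

namespace Bimonster

/-- The primitive cube root of unity `ω = e^{2πi/3}`. -/
def ω : ℂ := Complex.exp (2 * (Real.pi : ℂ) * Complex.I / 3)

/-- `θ = ω - ω̄ = √-3`. -/
def θ : ℂ := ω - conj ω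

/-- `ξ = e^{-πi/6}`. -/
def ξ : ℂ := Complex.exp (-((Real.pi : ℂ) * Complex.I) / 6)

/-- Membership in the ring of Eisenstein integers `ℰ = ℤ[ω] ⊆ ℂ`. -/
def EisP (z : ℂ) : Prop := ∃ a b : ℤ, z = (a : ℂ) + (b : ℂ) * ω

/-- The units of the ring of Eisenstein integers. -/
def EisUnit (z : ℂ) : Prop :=
  z = 1 ∨ z = -1 ∨ z = ω ∨ z = -ω ∨ z = ω ^ 2 ∨ z = -ω ^ 2

/-- A generator matrix of the ternary Golay code `𝒞₁₂ ⊆ 𝔽₃¹²`. -/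
def golay : Fin 6 → Fin 12 → ℤ :=
  ![![1, 0, 0, 0, 0, 0, 0, 1, 1, 1, 1, 1],
    ![0, 1, 0, 0, 0, 0, -1, 0, 1, -1, -1, 1],
    ![0, 0, 1, 0, 0, 0, -1, 1, 0, 1, -1, -1],
    ![0, 0, 0, 1, 0, 0, -1, -1, 1, 0, 1, -1],
    ![0, 0, 0, 0, 1, 0, -1, -1, -1, 1, 0, 1],
    ![0, 0, 0, 0, 0, 1, -1, 1, -1, -1, 1, 0]]

/-- The complex Leech lattice `Λ ⊆ ℰ¹²`: vectors `(m + θc_i + 3z_i)` with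
`m ∈ {0, ±1}`, `(c_i)` in the ternary Golay code and `z_i ∈ ℰ` with
`Σ z_i ≡ m mod θ`. -/
def Leech : Set (Fin 12 → ℂ) :=
  {lam | ∃ (m : ℤ) (s : Fin 6 → ℤ) (za zb : Fin 12 → ℤ),
    (m = 0 ∨ m = 1 ∨ m = -1) ∧
    (∀ i, lam i = (m : ℂ) + θ * ((∑ j, golay j i * s j : ℤ) : ℂ) +
        3 * ((za i : ℂ) + (zb i : ℂ) * ω)) ∧
    ∃ a b : ℤ, (∑ i, ((za i : ℂ) + (zb i : ℂ) * ω)) - (m : ℂ) = θ * ((a : ℂ) + (b : ℂ) * ω)}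

/-- The underlying 14-dimensional complex vector space of `L = Λ ⊕ H`. -/
abbrev V : Type := Fin 14 → ℂ

/-- The Hermitian form of `L = Λ ⊕ H`: `⟨u,v⟩ = -(1/3)Σ ū_i v_i` on the twelve Leech
coordinates, and the hyperbolic cell with Gram matrix `[[0, θ̄], [θ, 0]]` on the last
two coordinates.  It is conjugate-linear in the first variable. -/
def herm (u v : V) : ℂ :=
  -(1 / 3) *
      (∑ i : Fin 12, conj (u (Fin.castLE (by norm_num) i)) * v (Fin.castLE (by norm_num) i)) +
    conj (u 12) * conj θ * v 13 + conj (u 13) * θ * v 12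

/-- The norm `⟨λ,λ⟩ = -(1/3)Σ |λ_i|²` of a vector of the complex Leech lattice. -/
def normL (lam : Fin 12 → ℂ) : ℂ := -(1 / 3) * ∑ i, conj (lam i) * lam i

/-- Assemble a vector `(λ; x, y)` of `Λ ⊕ H` from its Leech part and its two
hyperbolic coordinates. -/
def glue (lam : Fin 12 → ℂ) (x y : ℂ) : V := fun i =>
  if h : (i : ℕ) < 12 then lam ⟨(i : ℕ), h⟩ else if (i : ℕ) = 12 then x else y

/-- The lattice `L = Λ ⊕ H` as a subset of `ℂ¹⁴`. -/
def Lset : Set V :=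
  {v | (fun i : Fin 12 => v (Fin.castLE (by norm_num) i)) ∈ Leech ∧
    EisP (v 12) ∧ EisP (v 13)}

/-- A root of `L`: a primitive lattice vector of norm `-3`. -/
def IsRoot (r : V) : Prop :=
  r ∈ Lset ∧ herm r r = -3 ∧
    ∀ α : ℂ, EisP α → ∀ y ∈ Lset, r = α • y → EisUnit α

/-- The `μ`-reflection in a vector `r`: `v ↦ v − (1−μ)·r·⟨r,v⟩/|r|²`. -/
def reflMap (μ : ℂ) (r v : V) : V := v - ((1 - μ) * herm r v / herm r r) • r

/-- The automorphism group of the lattice `L`. -/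
def AutL : Subgroup (V ≃ₗ[ℂ] V) where
  carrier := {g | (∀ v : V, v ∈ Lset ↔ g v ∈ Lset) ∧ ∀ u v : V, herm (g u) (g v) = herm u v}
  one_mem' := ⟨fun _ => Iff.rfl, fun _ _ => rfl⟩
  mul_mem' := by
    rintro f g ⟨hf1, hf2⟩ ⟨hg1, hg2⟩
    refine ⟨fun v => ?_, fun u v => ?_⟩
    · exact (hg1 v).trans (hf1 (g v))
    · exact (hf2 (g u) (g v)).trans (hg2 u v)
  inv_mem' := by
    rintro g ⟨hg1, hg2⟩
    refine ⟨fun v => ?_, fun u v => ?_⟩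
    · have h := hg1 (g.symm v)
      have hv : g (g.symm v) = v := g.apply_symm_apply v
      rw [hv] at h
      exact h.symm
    · have h := hg2 (g.symm u) (g.symm v)
      have hu : g (g.symm u) = u := g.apply_symm_apply u
      have hv : g (g.symm v) = v := g.apply_symm_apply v
      rw [hu, hv] at h
      exact h.symm

/-- The set of elements of `Aut(L)` acting as the `ω`-reflection in some root in `S`. -/
def ReflAutos (S : Set V) : Set (V ≃ₗ[ℂ] V) :=
  {g | g ∈ AutL ∧ ∃ r ∈ S, ∀ v, g v = reflMap ω r v}

/-- The reflection group `R(L)` of `L`. -/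
def RL : Subgroup (V ≃ₗ[ℂ] V) := Subgroup.closure (ReflAutos {r | IsRoot r})

/-- Two roots are adjacent when `|⟨a,b⟩| = √3`. -/
def Adj (a b : V) : Prop := ‖herm a b‖ = Real.sqrt 3

/-- A set of roots is connected if its adjacency graph is connected. -/
def ConnectedSet (Φ : Set V) : Prop :=
  ∀ a ∈ Φ, ∀ b ∈ Φ, Relation.ReflTransGen (fun x y => x ∈ Φ ∧ y ∈ Φ ∧ Adj x y) a b

/-- `Rad Φ` is the radical of a set `Φ` of roots: the closure of `Φ` under reflecting
members of the set in each other (and identification of unit multiples). -/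
inductive Rad (Φ : Set V) : V → Prop
  | base {r : V} : r ∈ Φ → Rad Φ r
  | refl {a b : V} : Rad Φ a → Rad Φ b → Rad Φ (reflMap ω a b)
  | inv {a b : V} : Rad Φ a → Rad Φ b → Rad Φ (reflMap (conj ω) a b)
  | unit {u : ℂ} {r : V} : EisUnit u → Rad Φ r → Rad Φ (u • r)

/-- The set `Ψ` of vectors `r = (λ; 1, θ(−3 − |λ|²)/6 + β)` with `λ ∈ Λ` and
`β ∈ ½ℤ` satisfying `2β + 1 ≡ |λ|² (mod 2)` (so that the last entry lies in `ℰ`). -/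
def PsiForm : Set V :=
  {r | ∃ (lam : Fin 12 → ℂ) (β : ℝ) (k j t : ℤ),
    lam ∈ Leech ∧ 2 * β = (k : ℝ) ∧ normL lam = (j : ℂ) ∧
    2 * β + 1 - (j : ℝ) = 2 * (t : ℝ) ∧
    r = glue lam 1 (θ * (-3 - normL lam) / 6 + (β : ℂ))}

/-! ### Basic facts on `ω` and `θ` -/

lemma omega_sq : ω ^ 2 = -1 - ω := by
  have h3 : ω ^ 3 = 1 := by
    unfold ω
    rw [← Complex.exp_nat_mul, ← Complex.exp_two_pi_mul_I]
    congr 1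
    push_cast
    ring
  have hne : ω ≠ 1 := by
    unfold ω
    intro h
    have h2 := congrArg Complex.re h
    have e : (2 * (Real.pi : ℂ) * Complex.I / 3) = ((2 * Real.pi / 3 : ℝ) : ℂ) * Complex.I := by
      push_cast; ring
    rw [e, Complex.exp_ofReal_mul_I_re] at h2
    have : Real.cos (2 * Real.pi / 3) < 1 := by
      have e2 : 2 * Real.pi / 3 = Real.pi - Real.pi / 3 := by ring
      rw [e2, Real.cos_pi_sub, Real.cos_pi_div_three]
      norm_num
    simp at h2
    linarith
  have : (ω - 1) * (ω ^ 2 + ω + 1) = 0 := by linear_combination h3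
  rcases mul_eq_zero.1 this with h | h
  · exact absurd (sub_eq_zero.1 h) hne
  · linear_combination h

lemma omega_normSq : conj ω * ω = 1 := by
  unfold ω
  rw [← Complex.exp_conj, ← Complex.exp_add]
  have c3 : conj (3 : ℂ) = 3 := Complex.conj_ofNat 3
  have c2 : conj (2 : ℂ) = 2 := Complex.conj_ofNat 2
  simp only [map_div₀, map_mul, Complex.conj_ofReal, Complex.conj_I, c2, c3]
  rw [← Complex.exp_zero]
  congr 1
  ring

lemma conj_omega : conj ω = -1 - ω := by
  have h1 := omega_normSq
  have h2 := omega_sq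
  linear_combination (-1 - ω) * h1 + (conj ω) * h2

lemma theta_eq : θ = 1 + 2 * ω := by
  unfold θ
  rw [conj_omega]; ring

lemma theta_sq : θ ^ 2 = -3 := by
  rw [theta_eq]; linear_combination 4 * omega_sq

lemma conj_theta : conj θ = -θ := by
  unfold θ; simp

lemma theta_ne : θ ≠ 0 := by
  intro h
  have := theta_sq
  rw [h] at this
  norm_num at this

lemma norm_theta : ‖θ‖ = Real.sqrt 3 := by
  have h : ‖θ‖ ^ 2 = 3 := by
    rw [← norm_pow, theta_sq]; simp
  rw [← h, Real.sqrt_sq (norm_nonneg _)]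

lemma eis_add {a b : ℂ} (ha : EisP a) (hb : EisP b) : EisP (a + b) := by
  obtain ⟨x, y, rfl⟩ := ha
  obtain ⟨z, w, rfl⟩ := hb
  exact ⟨x + z, y + w, by push_cast; ring⟩

lemma eis_mul {a b : ℂ} (ha : EisP a) (hb : EisP b) : EisP (a * b) := by
  obtain ⟨x, y, rfl⟩ := ha
  obtain ⟨z, w, rfl⟩ := hb
  exact ⟨x * z - y * w, x * w + y * z - y * w, by
    push_cast; linear_combination (y * w : ℂ) * omega_sq⟩

lemma eis_int (n : ℤ) : EisP (n : ℂ) := ⟨n, 0, by simp⟩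

lemma eis_omega : EisP ω := ⟨0, 1, by simp⟩

lemma eis_theta : EisP θ := ⟨1, 2, by rw [theta_eq]; simp⟩

lemma eis_neg {a : ℂ} (ha : EisP a) : EisP (-a) := by
  obtain ⟨x, y, rfl⟩ := ha
  exact ⟨-x, -y, by push_cast; ring⟩

lemma eis_conj {a : ℂ} (ha : EisP a) : EisP (conj a) := by
  obtain ⟨x, y, rfl⟩ := ha
  exact ⟨x - y, -y, by simp [conj_omega]; ring⟩

lemma eis_sum {n : ℕ} (f : Fin n → ℂ) (h : ∀ i, EisP (f i)) : EisP (∑ i, f i) := by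
  apply Finset.sum_induction f EisP (fun a b => eis_add) (by simpa using eis_int 0)
  intro i _; exact h i

lemma eis_unit {a b : ℂ} (ha : EisP a) (hb : EisP b) (h : a * b = 1) : EisUnit a := by
  obtain ⟨x, y, rfl⟩ := ha
  obtain ⟨z, w, rfl⟩ := hb
  have hN : ((x ^ 2 - x * y + y ^ 2 : ℤ) : ℂ) * ((z ^ 2 - z * w + w ^ 2 : ℤ) : ℂ) = 1 := by
    have h2 := congrArg conj h
    simp only [map_mul, map_add, map_one, conj_omega, map_intCast] at h2
    have e1 : ((x : ℂ) + y * ω) * (x + y * (-1 - ω)) = x ^ 2 - x * y + y ^ 2 := by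
      linear_combination (-(y : ℂ) ^ 2) * omega_sq
    have e2 : ((z : ℂ) + w * ω) * (z + w * (-1 - ω)) = z ^ 2 - z * w + w ^ 2 := by
      linear_combination (-(w : ℂ) ^ 2) * omega_sq
    push_cast
    rw [← e1, ← e2]
    linear_combination h * (((x : ℂ) + y * (-1 - ω)) * (z + w * (-1 - ω))) + h2
  have hN' : (x ^ 2 - x * y + y ^ 2) * (z ^ 2 - z * w + w ^ 2) = 1 := by exact_mod_cast hN
  have hx : x ^ 2 - x * y + y ^ 2 = 1 := by
    rcases Int.eq_one_or_neg_one_of_mul_eq_one hN' with h | h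
    · exact h
    · nlinarith [sq_nonneg (2 * x - y), sq_nonneg y]
  have b1 : y ≤ 1 := by nlinarith [sq_nonneg (2 * x - y)]
  have b2 : -1 ≤ y := by nlinarith [sq_nonneg (2 * x - y)]
  have b3 : x ≤ 1 := by nlinarith [sq_nonneg (2 * y - x)]
  have b4 : -1 ≤ x := by nlinarith [sq_nonneg (2 * y - x)]
  unfold EisUnit
  rw [omega_sq]
  interval_cases x <;> interval_cases y <;> simp at hx ⊢
  · exact Or.inr (Or.inr (Or.inr (Or.inl (by ring))))
  · exact Or.inr (Or.inr (Or.inr (Or.inr (by ring))))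

/-! ### The Leech lattice -/

/-- The Hermitian form on the Leech coordinates. -/
def ip (u v : Fin 12 → ℂ) : ℂ := -(1 / 3) * ∑ i, conj (u i) * v i

lemma ip_add_left (u v w : Fin 12 → ℂ) : ip (u + v) w = ip u w + ip v w := by
  simp only [ip, Pi.add_apply, map_add, add_mul, Finset.sum_add_distrib]; ring

lemma ip_add_right (u v w : Fin 12 → ℂ) : ip u (v + w) = ip u v + ip u w := by
  simp only [ip, Pi.add_apply, mul_add, Finset.sum_add_distrib]

lemma ip_neg_left (u v : Fin 12 → ℂ) : ip (-u) v = -ip u v := by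
  simp [ip]

lemma ip_neg_right (u v : Fin 12 → ℂ) : ip u (-v) = -ip u v := by
  simp [ip]

lemma ip_conj (u v : Fin 12 → ℂ) : conj (ip u v) = ip v u := by
  simp [ip, mul_comm, Complex.conj_ofNat]

lemma normL_eq (u : Fin 12 → ℂ) : normL u = ip u u := rfl

lemma golay_sum (j : Fin 6) : (3 : ℤ) ∣ ∑ i, golay j i := by
  revert j; decide

lemma golay_orth (j k : Fin 6) : (3 : ℤ) ∣ ∑ i, golay j i * golay k i := by
  revert j k; decide

lemma word_sum (s : Fin 6 → ℤ) : (3 : ℤ) ∣ ∑ i, ∑ j, golay j i * s j := by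
  rw [Finset.sum_comm]
  apply Finset.dvd_sum
  intro j _
  rw [← Finset.sum_mul]
  exact Dvd.dvd.mul_right (golay_sum j) _

lemma word_orth (s t : Fin 6 → ℤ) :
    (3 : ℤ) ∣ ∑ i, (∑ j, golay j i * s j) * (∑ j, golay j i * t j) := by
  simp only [Finset.sum_mul_sum]
  rw [Finset.sum_comm]
  apply Finset.dvd_sum
  intro j _
  rw [Finset.sum_comm]
  apply Finset.dvd_sum
  intro k _
  have : ∑ i, golay j i * s j * (golay k i * t k) = (∑ i, golay j i * golay k i) * (s j * t k) := by
    rw [Finset.sum_mul]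
    apply Finset.sum_congr rfl
    intro i _; ring
  rw [this]
  exact Dvd.dvd.mul_right (golay_orth j k) _

/-- A convenient description of the Leech lattice without a bound on `m`. -/
lemma leech_of {lam : Fin 12 → ℂ} (m : ℤ) (s : Fin 6 → ℤ) (z : Fin 12 → ℂ)
    (hz : ∀ i, EisP (z i))
    (h : ∀ i, lam i = (m : ℂ) + θ * ((∑ j, golay j i * s j : ℤ) : ℂ) + 3 * z i)
    (e : ℂ) (he : EisP e) (hs : (∑ i, z i) - m = θ * e) : lam ∈ Leech := by
  choose za zb hz using hz
  obtain ⟨q, m0, hm0, hq⟩ : ∃ q m0 : ℤ, (m0 = 0 ∨ m0 = 1 ∨ m0 = -1) ∧ m = m0 + 3 * q := by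
    refine ⟨(m + 1) / 3, (m + 1) % 3 - 1, ?_, ?_⟩ <;> omega
  obtain ⟨a, b, hab⟩ : EisP (e + (-5 * q : ℤ) * θ) :=
    eis_add he (eis_mul (eis_int _) eis_theta)
  refine ⟨m0, s, fun i => za i + q, zb, hm0, ?_, a, b, ?_⟩
  · intro i
    rw [h i, hz i, hq]; push_cast; ring
  · rw [← hab]
    have : (∑ i, (((za i + q : ℤ) : ℂ) + zb i * ω)) = (∑ i, z i) + 12 * q := by
      have : ∀ i, (((za i + q : ℤ) : ℂ) + zb i * ω) = z i + q := by
        intro i; rw [hz i]; push_cast; ring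
      simp only [this, Finset.sum_add_distrib]
      simp
    rw [this]
    have hq' : (m : ℂ) = m0 + 3 * q := by exact_mod_cast hq
    push_cast
    linear_combination hs + hq' + 5 * q * theta_sq

lemma leech_data {lam : Fin 12 → ℂ} (h : lam ∈ Leech) :
    ∃ (m : ℤ) (s : Fin 6 → ℤ) (z : Fin 12 → ℂ) (e : ℂ), (∀ i, EisP (z i)) ∧
      (∀ i, lam i = (m : ℂ) + θ * ((∑ j, golay j i * s j : ℤ) : ℂ) + 3 * z i) ∧
      EisP e ∧ (∑ i, z i) - m = θ * e := by
  obtain ⟨m, s, za, zb, -, h, a, b, hab⟩ := h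
  exact ⟨m, s, fun i => za i + zb i * ω, a + b * ω, fun i => ⟨_, _, rfl⟩, h, ⟨_, _, rfl⟩, hab⟩

/-- The Leech lattice as a subgroup. -/
def LeechG : AddSubgroup (Fin 12 → ℂ) where
  carrier := Leech
  zero_mem' := leech_of 0 0 0 (fun _ => by simpa using eis_int 0) (by simp) 0
    (by simpa using eis_int 0) (by simp)
  add_mem' := by
    intro a b ha hb
    obtain ⟨m, s, z, e, hz, h, he, hs⟩ := leech_data ha
    obtain ⟨m', s', z', e', hz', h', he', hs'⟩ := leech_data hb
    refine leech_of (m + m') (s + s') (z + z') (fun i => eis_add (hz i) (hz' i)) ?_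
      (e + e') (eis_add he he') ?_
    · intro i
      simp only [Pi.add_apply, h i, h' i, mul_add, Finset.sum_add_distrib]
      push_cast; ring
    · simp only [Pi.add_apply, Finset.sum_add_distrib]
      push_cast; linear_combination hs + hs'
  neg_mem' := by
    intro a ha
    obtain ⟨m, s, z, e, hz, h, he, hs⟩ := leech_data ha
    refine leech_of (-m) (-s) (-z) (fun i => eis_neg (hz i)) ?_ (-e) (eis_neg he) ?_
    · intro i
      simp only [Pi.neg_apply, h i, mul_neg, Finset.sum_neg_distrib]
      push_cast; ring
    · simp only [Pi.neg_apply, Finset.sum_neg_distrib]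
      push_cast; linear_combination -hs

lemma mem_LeechG {x : Fin 12 → ℂ} : x ∈ LeechG ↔ x ∈ Leech := Iff.rfl

/-- Inner products on the Leech lattice lie in `θℰ`. -/
lemma ip_leech {u v : Fin 12 → ℂ} (hu : u ∈ Leech) (hv : v ∈ Leech) :
    ∃ x y : ℤ, ip u v = θ * (x + y * ω) := by
  obtain ⟨m, s, z, e, hz, h, he, hs⟩ := leech_data hu
  obtain ⟨m', s', z', e', hz', h', he', hs'⟩ := leech_data hv
  set c : Fin 12 → ℤ := fun i => ∑ j, golay j i * s j with hc
  set c' : Fin 12 → ℤ := fun i => ∑ j, golay j i * s' j with hc'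
  obtain ⟨p, hp⟩ : (3 : ℤ) ∣ ∑ i, c i := word_sum s
  obtain ⟨p', hp'⟩ : (3 : ℤ) ∣ ∑ i, c' i := word_sum s'
  obtain ⟨q, hq⟩ : (3 : ℤ) ∣ ∑ i, c i * c' i := word_orth s s'
  have hp : ∑ i, (c i : ℂ) = 3 * p := by exact_mod_cast hp
  have hp' : ∑ i, (c' i : ℂ) = 3 * p' := by exact_mod_cast hp'
  have hq : ∑ i, (c i : ℂ) * c' i = 3 * q := by exact_mod_cast hq
  have hs2 : (∑ i, conj (z i)) - m = -θ * conj e := by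
    have := congrArg conj hs
    simpa [conj_theta] using this
  have key : ∑ i, conj (u i) * v i = 12 * m * m' + 3 * (∑ i, (c i : ℂ) * c' i)
      + m * θ * (∑ i, (c' i : ℂ)) - m' * θ * (∑ i, (c i : ℂ)) + 3 * m * (∑ i, z' i)
      + 3 * m' * (∑ i, conj (z i)) - 3 * θ * (∑ i, c i * z' i) + 3 * θ * (∑ i, conj (z i) * c' i)
      + 9 * ∑ i, conj (z i) * z' i := by
    have e12 : (12 * m * m' : ℂ) = ∑ i : Fin 12, (m * m' : ℂ) := by simp; ring
    rw [e12]
    simp only [Finset.mul_sum, ← Finset.sum_add_distrib, ← Finset.sum_sub_distrib]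
    apply Finset.sum_congr rfl
    intro i _
    rw [h i, h' i]
    simp only [map_add, map_mul, map_intCast, conj_theta]
    have : conj (3 : ℂ) = 3 := Complex.conj_ofNat 3
    rw [this]
    change ((m : ℂ) + -θ * (c i : ℂ) + 3 * conj (z i)) * (m' + θ * (c' i : ℂ) + 3 * z' i) = _
    linear_combination (-(c i : ℂ) * c' i) * theta_sq
  set A := ∑ i, (c i : ℂ) * z' i with hA
  set B := ∑ i, conj (z i) * (c' i : ℂ) with hB
  set C := ∑ i, conj (z i) * z' i with hC
  have eA : EisP A := eis_sum _ fun i => eis_mul (eis_int _) (hz' i)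
  have eB : EisP B := eis_sum _ fun i => eis_mul (eis_conj (hz i)) (eis_int _)
  have eC : EisP C := eis_sum _ fun i => eis_mul (eis_conj (hz i)) (hz' i)
  have eF : EisP (((2 * m * m' + q : ℤ) : ℂ) * θ + (m' * p - m * p' : ℤ) + (-m : ℤ) * e'
      + m' * conj e + A + -B + θ * C) := by
    refine eis_add (eis_add (eis_add (eis_add (eis_add (eis_add ?_ ?_) ?_) ?_) ?_) ?_) ?_
    · exact eis_mul (eis_int _) eis_theta
    · exact eis_int _
    · exact eis_mul (eis_int _) he'
    · exact eis_mul (eis_int _) (eis_conj he)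
    · exact eA
    · exact eis_neg eB
    · exact eis_mul eis_theta eC
  obtain ⟨x, y, hxy⟩ := eF
  refine ⟨x, y, ?_⟩
  rw [← hxy, ip, key, hp, hp', hq]
  push_cast
  linear_combination (-(m : ℂ)) * hs' - m' * hs2 - (2 * m * m' + q + C) * theta_sq

lemma int_of_norm {u : Fin 12 → ℂ} (hu : u ∈ Leech) : ∃ j : ℤ, normL u = 3 * j := by
  obtain ⟨x, y, h⟩ := ip_leech hu hu
  have h2 := ip_conj u u
  rw [h] at h2
  simp [conj_omega, conj_theta] at h2
  have h3 : (2 * x - y : ℂ) = 0 := by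
    apply mul_left_cancel₀ theta_ne
    linear_combination -h2
  refine ⟨-x, ?_⟩
  rw [normL_eq, h]
  push_cast
  have : (y : ℂ) = 2 * x := by linear_combination -h3
  rw [this]
  have t := theta_sq
  have te := theta_eq
  linear_combination (x : ℂ) * t - θ * x * te

/-! ### The roots -/

/-- The root with Leech part `l` and `β = k/2`. -/
def Q (l : Fin 12 → ℂ) (k : ℂ) : V := glue l 1 (θ * (-3 - normL l) / 6 + k / 2)

/-- The admissible pairs `(l, k)`. -/
def Good (l : Fin 12 → ℂ) (k : ℂ) : Prop :=
  l ∈ Leech ∧ ∃ j t : ℤ, normL l = j ∧ k = 2 * t + j - 1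

lemma psi_iff (r : V) : r ∈ PsiForm ↔ ∃ l k, Good l k ∧ r = Q l k := by
  constructor
  · rintro ⟨l, β, k, j, t, hl, h1, h2, h3, rfl⟩
    have h3' : 2 * (β : ℂ) + 1 - j = 2 * t := by exact_mod_cast congrArg (fun x : ℝ => (x : ℂ)) h3
    refine ⟨l, 2 * β, ⟨hl, j, t, h2, by linear_combination h3'⟩, ?_⟩
    unfold Q
    congr 2
    ring
  · rintro ⟨l, k, ⟨hl, j, t, h2, rfl⟩, rfl⟩
    refine ⟨l, (2 * t + j - 1 : ℝ) / 2, 2 * t + j - 1, j, t, hl, by push_cast; ring, h2, by ring, ?_⟩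
    unfold Q
    congr 2
    push_cast
    ring

lemma glue_lt (l : Fin 12 → ℂ) (x y : ℂ) (i : Fin 12) (h : 12 ≤ 14) :
    glue l x y (Fin.castLE h i) = l i := by
  simp [glue]

lemma glue_12 (l : Fin 12 → ℂ) (x y : ℂ) : glue l x y 12 = x := by
  simp [glue]

lemma glue_13 (l : Fin 12 → ℂ) (x y : ℂ) : glue l x y 13 = y := by
  simp [glue]

lemma conj_normL (l : Fin 12 → ℂ) : conj (normL l) = normL l := by
  rw [normL_eq, ip_conj]

lemma good_conj {l : Fin 12 → ℂ} {k : ℂ} (h : Good l k) : conj k = k := by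
  obtain ⟨-, j, t, -, rfl⟩ := h
  simp [Complex.conj_ofNat]

lemma herm_Q {l l' : Fin 12 → ℂ} {k k' : ℂ} (h : conj k = k) :
    herm (Q l k) (Q l' k') = ip l l' - 3 - (normL l + normL l') / 2 + θ * (k - k') / 2 := by
  unfold herm Q
  simp only [glue_lt, glue_12, glue_13]
  have c3 : conj (3 : ℂ) = 3 := Complex.conj_ofNat 3
  have c6 : conj (6 : ℂ) = 6 := Complex.conj_ofNat 6
  have c2 : conj (2 : ℂ) = 2 := Complex.conj_ofNat 2
  simp only [map_one, map_add, map_mul, map_div₀, map_sub, map_neg, conj_theta, conj_normL, h,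
    c2, c3, c6]
  rw [ip]
  linear_combination ((6 + normL l + normL l') / 6) * theta_sq

lemma herm_conj (u v : V) : conj (herm u v) = herm v u := by
  unfold herm
  simp [mul_comm, Complex.conj_ofNat]
  ring

lemma adj_symm {u v : V} (h : Adj u v) : Adj v u := by
  unfold Adj at *
  rw [← herm_conj, RCLike.norm_conj, h]

lemma isRoot_Q {l : Fin 12 → ℂ} {k : ℂ} (h : Good l k) : IsRoot (Q l k) := by
  refine ⟨⟨?_, ?_, ?_⟩, ?_, ?_⟩
  · simp only [Q, glue_lt]; exact h.1
  · rw [Q, glue_12]; simpa using eis_int 1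
  · rw [Q, glue_13]
    obtain ⟨hl, j, t, hj, rfl⟩ := h
    obtain ⟨j', hj'⟩ := int_of_norm hl
    have : j = 3 * j' := by
      rw [hj] at hj'; exact_mod_cast hj'
    subst this
    refine ⟨t + j' - 1, -1 - j', ?_⟩
    rw [hj, theta_eq]
    push_cast
    ring
  · rw [herm_Q (good_conj h), ← normL_eq]; ring
  · intro α hα y hy e
    apply eis_unit hα hy.2.1
    have := congrFun e 12
    rw [Q, glue_12] at this
    simpa using this.symm

/-! ### Connectivity -/

/-- Paths in `Ψ`. -/
def Con (a b : V) : Prop :=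
  Relation.ReflTransGen (fun x y => x ∈ PsiForm ∧ y ∈ PsiForm ∧ Adj x y) a b

lemma con_symm {a b : V} (h : Con a b) : Con b a := by
  unfold Con at *
  induction h with
  | refl => exact Relation.ReflTransGen.refl
  | tail _ h ih => exact Relation.ReflTransGen.head ⟨h.2.1, h.1, adj_symm h.2.2⟩ ih

/-- The minimal vectors of the Leech lattice. -/
def MinV : Set (Fin 12 → ℂ) := {u | u ∈ Leech ∧ normL u = -6}

lemma min_neg {u : Fin 12 → ℂ} (h : u ∈ MinV) : -u ∈ MinV := by
  refine ⟨LeechG.neg_mem h.1, ?_⟩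
  rw [normL_eq, ip_neg_left, ip_neg_right, neg_neg]; exact h.2

/-- The symplectic form. -/
def J (u v : Fin 12 → ℂ) : ℂ := (ip u v - ip v u) / θ

lemma J_add_left (u v w : Fin 12 → ℂ) : J (u + v) w = J u w + J v w := by
  simp only [J, ip_add_left, ip_add_right]; ring

lemma J_neg_right (u v : Fin 12 → ℂ) : J u (-v) = - J u v := by
  simp only [J, ip_neg_left, ip_neg_right]; ring

lemma J_self (u : Fin 12 → ℂ) : J u u = 0 := by simp [J]

lemma J_symm (u v : Fin 12 → ℂ) : J u v = - J v u := by simp only [J]; ring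

lemma step {l u : Fin 12 → ℂ} {k : ℂ} (h : Good l k) (hu : u ∈ MinV) (ε : ℤ)
    (hε : ε = 1 ∨ ε = -1) :
    Good (l + u) (k + J l u + 2 * ε) ∧ Con (Q l k) (Q (l + u) (k + J l u + 2 * ε)) := by
  obtain ⟨x, y, hxy⟩ := ip_leech h.1 hu.1
  have hyx : ip u l = -θ * (x + y * (-1 - ω)) := by
    rw [← ip_conj, hxy]; simp [conj_omega, conj_theta]
  have hJ : J l u = 2 * x - y := by
    rw [J, hxy, hyx, div_eq_iff theta_ne]; ring
  have hN : normL (l + u) = normL l - 6 + ip l u + ip u l := by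
    have := hu.2
    rw [normL_eq] at this
    rw [normL_eq, normL_eq, ip_add_left, ip_add_right, ip_add_right, this]; ring
  have hg : Good (l + u) (k + J l u + 2 * ε) := by
    refine ⟨LeechG.add_mem h.1 hu.1, ?_⟩
    obtain ⟨-, j, t, hj, rfl⟩ := h
    refine ⟨j - 6 - 3 * y, t + x + y + ε + 3, ?_, ?_⟩
    · rw [hN, hj, hxy, hyx]
      push_cast
      linear_combination (y : ℂ) * theta_sq - θ * y * theta_eq
    · rw [hJ]; push_cast; ring
  refine ⟨hg, Relation.ReflTransGen.single ⟨(psi_iff _).2 ⟨_, _, h, rfl⟩,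
    (psi_iff _).2 ⟨_, _, hg, rfl⟩, ?_⟩⟩
  unfold Adj
  rw [herm_Q (good_conj h), ip_add_right, ← normL_eq, hN, hxy, hyx, hJ]
  have : normL l + θ * (x + y * ω) - 3 - (normL l + (normL l - 6 + θ * (x + y * ω)
      + -θ * (x + y * (-1 - ω)))) / 2 + θ * (k - (k + (2 * x - y) + 2 * ε)) / 2 = -ε * θ := by
    ring
  rw [this]
  rcases hε with rfl | rfl <;> simp [norm_theta]

/-- A commutator of two translations. -/
lemma shift_comm {l a b : Fin 12 → ℂ} {k : ℂ} (h : Good l k) (ha : a ∈ MinV) (hb : b ∈ MinV) :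
    Con (Q l k) (Q l (k + 2 * J a b)) := by
  obtain ⟨g1, c1⟩ := step h ha 1 (Or.inl rfl)
  obtain ⟨g2, c2⟩ := step g1 hb (-1) (Or.inr rfl)
  obtain ⟨g3, c3⟩ := step g2 (min_neg ha) 1 (Or.inl rfl)
  obtain ⟨g4, c4⟩ := step g3 (min_neg hb) (-1) (Or.inr rfl)
  have c := ((c1.trans c2).trans c3).trans c4
  have e1 : l + a + b + -a + -b = l := by abel
  rw [e1] at c
  change Con _ _ at c
  convert c using 2
  simp only [J_add_left, J_neg_right, J_self]
  have e2 : J (-a) b = - J a b := by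
    rw [J_symm, J_neg_right, J_symm b a]; ring
  rw [e2, J_symm b a]
  push_cast
  ring

lemma normL_sum (u : Fin 12 → ℂ) : normL u = -(1 / 3) * ∑ i, conj (u i) * u i := rfl

/-! ### Explicit minimal vectors -/

/-- `θ` times a basis codeword. -/
def vg (j : Fin 6) : Fin 12 → ℂ := fun i => θ * (golay j i : ℂ)

/-- `3z(e_i - e_0)`. -/
def vd (z : ℂ) (i : Fin 12) : Fin 12 → ℂ := Pi.single i (3 * z) - Pi.single 0 (3 * z)

/-- `(1,…,1) + 3 z e_0 + 3 w e_1`. -/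
def vu (z w : ℂ) : Fin 12 → ℂ := fun i => 1 + 3 * (Pi.single 0 z + Pi.single 1 w : Fin 12 → ℂ) i

lemma eis_zero : EisP 0 := by simpa using eis_int 0
lemma eis_one : EisP 1 := by simpa using eis_int 1

lemma eis_single (i : Fin 12) {z : ℂ} (hz : EisP z) (j : Fin 12) :
    EisP ((Pi.single i z : Fin 12 → ℂ) j) := by
  by_cases h : j = i
  · subst h; simpa using hz
  · simpa [h] using eis_zero

lemma vg_min (j : Fin 6) : vg j ∈ MinV := by
  constructor
  · refine leech_of 0 (Pi.single j 1) 0 (fun _ => eis_zero) ?_ 0 eis_zero (by simp)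
    intro i
    simp [vg, Pi.single_apply]
  · rw [normL_sum]
    have h : ∑ i, golay j i * golay j i = 6 := by revert j; decide
    have h' : ∑ i, (golay j i : ℂ) * golay j i = 6 := by exact_mod_cast h
    have : ∀ i, conj (vg j i) * vg j i = 3 * ((golay j i : ℂ) * golay j i) := by
      intro i
      simp only [vg, map_mul, conj_theta, map_intCast]
      linear_combination (-(golay j i : ℂ) * golay j i) * theta_sq
    simp only [this, ← Finset.mul_sum, h']
    norm_num

lemma vd_leech {z : ℂ} (hz : EisP z) (i : Fin 12) : vd z i ∈ Leech := by
  refine leech_of 0 0 (Pi.single i z + -Pi.single 0 z)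
    (fun j => eis_add (eis_single i hz j) (eis_neg (eis_single 0 hz j))) ?_ 0 eis_zero ?_
  · intro j
    simp only [vd, Pi.sub_apply, Pi.add_apply, Pi.neg_apply, Pi.single_apply]
    split_ifs <;> simp
  · simp [Finset.sum_add_distrib]

lemma vd_min {z : ℂ} (hz : EisP z) (h1 : conj z * z = 1) {i : Fin 12} (hi : i ≠ 0) :
    vd z i ∈ MinV := by
  refine ⟨vd_leech hz i, ?_⟩
  rw [normL_sum]
  have c3 : conj (3 : ℂ) = 3 := Complex.conj_ofNat 3
  have : ∀ j, conj (vd z i j) * vd z i j = (Pi.single i 9 + Pi.single 0 9 : Fin 12 → ℂ) j := by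
    intro j
    simp only [vd, Pi.sub_apply, Pi.add_apply, Pi.single_apply]
    by_cases h : j = i
    · subst h
      simp [hi, c3]
      linear_combination 9 * h1
    · by_cases h0 : j = 0
      · subst h0
        simp [h, c3]
        linear_combination 9 * h1
      · simp [h, h0]
  simp only [this]
  simp [Finset.sum_add_distrib]
  norm_num

lemma vu_leech {z w e : ℂ} (hz : EisP z) (hw : EisP w) (he : EisP e) (h : z + w - 1 = θ * e) :
    vu z w ∈ Leech := by
  refine leech_of 1 0 (Pi.single 0 z + Pi.single 1 w)
    (fun j => eis_add (eis_single 0 hz j) (eis_single 1 hw j)) ?_ e he ?_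
  · intro j; simp [vu]
  · simp [Finset.sum_add_distrib, ← h]

lemma vu_norm (z w : ℂ) : normL (vu z w) =
    -(1 / 3) * (10 + conj (1 + 3 * z) * (1 + 3 * z) + conj (1 + 3 * w) * (1 + 3 * w)) := by
  rw [normL_sum]
  congr 1
  rw [Fin.sum_univ_succ, Fin.sum_univ_succ]
  have : ∀ i : Fin 10, conj (vu z w i.succ.succ) * vu z w i.succ.succ = 1 := by
    intro i
    have h1 : i.succ.succ ≠ (1 : Fin 12) := by
      rw [← Fin.succ_zero_eq_one]
      intro h
      exact Fin.succ_ne_zero i (Fin.succ_injective _ h)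
    have : vu z w i.succ.succ = 1 := by
      simp [vu, Pi.single_apply, h1]
    rw [this]; simp
  simp only [this]
  simp [vu]
  ring

lemma vu1_min : vu ω 0 ∈ MinV := by
  refine ⟨vu_leech eis_omega eis_zero (e := 1 + ω) (eis_add eis_one eis_omega) ?_, ?_⟩
  · rw [theta_eq]; linear_combination -2 * omega_sq
  · rw [vu_norm]
    simp [conj_omega, Complex.conj_ofNat]
    linear_combination -3 * omega_sq

lemma vu2_min : vu (-1 - ω) 0 ∈ MinV := by
  refine ⟨vu_leech (e := ω) (by rw [← conj_omega]; exact eis_conj eis_omega)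
    eis_zero eis_omega ?_, ?_⟩
  · rw [theta_eq]; linear_combination -2 * omega_sq
  · rw [vu_norm]
    simp [conj_omega, Complex.conj_ofNat]
    linear_combination -3 * omega_sq

lemma vu3_min : vu (-1) (-1) ∈ MinV := by
  refine ⟨vu_leech (eis_neg eis_one) (eis_neg eis_one) eis_theta ?_, ?_⟩
  · linear_combination -theta_sq
  · rw [vu_norm]
    simp [Complex.conj_ofNat]
    norm_num

/-- The subgroup generated by minimal vectors. -/
def G : AddSubgroup (Fin 12 → ℂ) := AddSubgroup.closure MinV

lemma min_G {u : Fin 12 → ℂ} (h : u ∈ MinV) : u ∈ G := AddSubgroup.subset_closure h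

lemma vd_G {z : ℂ} (hz : EisP z) (i : Fin 12) : vd z i ∈ G := by
  by_cases hi : i = 0
  · subst hi; simp [vd, G.zero_mem]
  obtain ⟨a, b, rfl⟩ := hz
  have : vd (a + b * ω) i = a • vd 1 i + b • vd ω i := by
    funext j
    simp only [vd, Pi.sub_apply, Pi.add_apply, Pi.smul_apply, Pi.single_apply]
    simp only [zsmul_eq_mul]
    split_ifs <;> ring
  rw [this]
  exact G.add_mem (G.zsmul_mem (min_G (vd_min eis_one (by simp) hi)) _)
    (G.zsmul_mem (min_G (vd_min eis_omega omega_normSq hi)) _)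

lemma t1_G : (Pi.single 0 (3 * θ) : Fin 12 → ℂ) ∈ G := by
  have : (Pi.single 0 (3 * θ) : Fin 12 → ℂ) = vu ω 0 - vu (-1 - ω) 0 := by
    funext j
    simp only [vu, Pi.sub_apply, Pi.add_apply, Pi.single_apply]
    rw [theta_eq]
    split_ifs <;> ring
  rw [this]
  exact G.sub_mem (min_G vu1_min) (min_G vu2_min)

lemma t2_G : (Pi.single 0 (3 * θ * ω) : Fin 12 → ℂ) ∈ G := by
  have : (Pi.single 0 (3 * θ * ω) : Fin 12 → ℂ) =
      -(vu (-1 - ω) 0 - (vu (-1) (-1) + vd 1 1)) - Pi.single 0 (3 * θ) := by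
    funext j
    simp only [vu, vd, Pi.sub_apply, Pi.add_apply, Pi.neg_apply, Pi.single_apply]
    rw [theta_eq]
    by_cases h0 : j = 0
    · subst h0
      simp
      linear_combination 6 * omega_sq
    · by_cases h1 : j = 1
      · subst h1
        simp
      · simp [h0, h1]
  rw [this]
  exact G.sub_mem (G.neg_mem (G.sub_mem (min_G vu2_min)
    (G.add_mem (min_G vu3_min) (vd_G eis_one 1)))) t1_G

lemma t_G {e : ℂ} (he : EisP e) : (Pi.single 0 (3 * θ * e) : Fin 12 → ℂ) ∈ G := by
  obtain ⟨a, b, rfl⟩ := he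
  have : (Pi.single 0 (3 * θ * (a + b * ω)) : Fin 12 → ℂ) =
      a • Pi.single 0 (3 * θ) + b • Pi.single 0 (3 * θ * ω) := by
    funext j
    simp only [Pi.add_apply, Pi.smul_apply, Pi.single_apply]
    simp only [zsmul_eq_mul]
    split_ifs <;> ring
  rw [this]
  exact G.add_mem (G.zsmul_mem t1_G _) (G.zsmul_mem t2_G _)

lemma leech_G {l : Fin 12 → ℂ} (h : l ∈ Leech) : l ∈ G := by
  obtain ⟨m, s, z, e, hz, h, he, hs⟩ := leech_data h
  have : l = m • vu ω 0 + ∑ j, s j • vg j + ∑ i, vd (z i) i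
      + Pi.single 0 (3 * θ * (e + m * (-1 - ω))) := by
    funext i
    simp only [Pi.add_apply, Finset.sum_apply, Pi.smul_apply]
    simp only [zsmul_eq_mul]
    have e1 : ∑ j, (s j : ℂ) * vg j i = θ * ((∑ j, golay j i * s j : ℤ) : ℂ) := by
      push_cast
      rw [Finset.mul_sum]
      apply Finset.sum_congr rfl
      intro j _; simp only [vg]; ring
    have e2 : ∑ j, vd (z j) j i = 3 * z i - (Pi.single 0 (3 * ∑ j, z j) : Fin 12 → ℂ) i := by
      simp only [vd, Pi.sub_apply, Finset.sum_sub_distrib, Pi.single_apply]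
      by_cases h0 : i = 0
      · simp [h0, Finset.mul_sum]
      · simp [h0]
    rw [e1, e2, h i]
    simp only [vu, Pi.add_apply, Pi.single_apply]
    by_cases h0 : i = 0
    · subst h0
      simp
      rw [theta_eq] at *
      linear_combination 3 * hs + 6 * m * omega_sq
    · simp [h0]
  rw [this]
  refine G.add_mem (G.add_mem (G.add_mem ?_ ?_) ?_) ?_
  · exact G.zsmul_mem (min_G vu1_min) _
  · exact G.sum_mem fun j _ => G.zsmul_mem (min_G (vg_min j)) _
  · exact G.sum_mem fun i _ => vd_G (hz i) i
  · exact t_G (eis_add he (eis_mul (eis_int _) (by rw [← conj_omega]; exact eis_conj eis_omega)))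

lemma J_ex : J (vg 0) (vd ω 1) = 1 := by
  have h1 : ip (vg 0) (vd ω 1) = -θ * ω := by
    unfold ip
    have : ∀ i, conj (vg 0 i) * vd ω 1 i = (Pi.single 0 (3 * θ * ω) : Fin 12 → ℂ) i := by
      intro i
      simp only [vg, vd, Pi.sub_apply, Pi.single_apply, map_mul, conj_theta, map_intCast]
      by_cases h0 : i = 0
      · subst h0; simp [golay]; ring
      · by_cases h1 : i = 1
        · subst h1; simp [golay]
        · simp [h0, h1]
    simp only [this]
    simp
    ring
  have h2 : ip (vd ω 1) (vg 0) = θ * (-1 - ω) := by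
    rw [← ip_conj, h1]; simp [conj_theta, conj_omega]
  rw [J, h1, h2, div_eq_iff theta_ne]
  ring

lemma shift_one {l : Fin 12 → ℂ} {k : ℂ} (h : Good l k) : Con (Q l k) (Q l (k + 2)) := by
  have := shift_comm h (vg_min 0) (vd_min eis_omega omega_normSq (i := 1) (by decide))
  rwa [J_ex, mul_one] at this

lemma good_shift {l : Fin 12 → ℂ} {k : ℂ} (h : Good l k) (n : ℤ) : Good l (k + 2 * n) := by
  obtain ⟨hl, j, t, hj, rfl⟩ := h
  exact ⟨hl, j, t + n, hj, by push_cast; ring⟩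

lemma shift_nat {l : Fin 12 → ℂ} {k : ℂ} (h : Good l k) (n : ℕ) :
    Con (Q l k) (Q l (k + 2 * n)) := by
  induction n with
  | zero => simp; exact Relation.ReflTransGen.refl
  | succ n ih =>
    have := shift_one (good_shift h n)
    refine ih.trans ?_
    change Con _ _
    convert this using 2
    all_goals push_cast
    all_goals ring

lemma shift {l : Fin 12 → ℂ} {k k' : ℂ} (h : Good l k) (h' : Good l k') :
    Con (Q l k) (Q l k') := by
  obtain ⟨-, j, t, hj, e⟩ := id h
  obtain ⟨-, j', t', hj', e'⟩ := id h'
  have hjj : (j : ℂ) = j' := by rw [← hj, hj']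
  rcases le_total t t' with ht | ht
  · obtain ⟨n, hn⟩ := Int.le.dest ht
    have hn' : (t : ℂ) + n = t' := by exact_mod_cast hn
    have := shift_nat h n
    have e2 : k' = k + 2 * n := by rw [e, e', ← hn', hjj]; ring
    rwa [e2]
  · obtain ⟨n, hn⟩ := Int.le.dest ht
    have hn' : (t' : ℂ) + n = t := by exact_mod_cast hn
    have := shift_nat h' n
    have e2 : k = k' + 2 * n := by rw [e, e', ← hn', hjj]; ring
    rw [e2]
    exact con_symm this

lemma good_exists {l : Fin 12 → ℂ} (h : l ∈ Leech) : ∃ k, Good l k := by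
  obtain ⟨j, hj⟩ := int_of_norm h
  exact ⟨_, h, 3 * j, 0, by rw [hj]; push_cast; rfl, rfl⟩

lemma trans_G {u : Fin 12 → ℂ} (h : u ∈ G) : u ∈ Leech ∧ ∀ l k, Good l k →
    ∃ k', Good (l + u) k' ∧ Con (Q l k) (Q (l + u) k') := by
  induction h using AddSubgroup.closure_induction with
  | mem x hx => exact ⟨hx.1, fun l k h => ⟨_, step h hx 1 (Or.inl rfl)⟩⟩
  | zero =>
    refine ⟨LeechG.zero_mem, fun l k h => ⟨k, by simpa using h, ?_⟩⟩
    rw [add_zero]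
    exact Relation.ReflTransGen.refl
  | add x y _ _ hx hy =>
    refine ⟨LeechG.add_mem hx.1 hy.1, fun l k h => ?_⟩
    obtain ⟨k1, g1, c1⟩ := hx.2 l k h
    obtain ⟨k2, g2, c2⟩ := hy.2 _ k1 g1
    rw [← add_assoc]
    exact ⟨k2, g2, c1.trans c2⟩
  | neg x _ hx =>
    refine ⟨LeechG.neg_mem hx.1, fun l k h => ?_⟩
    obtain ⟨k0, g0⟩ := good_exists (LeechG.add_mem h.1 (LeechG.neg_mem hx.1))
    obtain ⟨k1, g1, c1⟩ := hx.2 _ k0 g0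
    rw [neg_add_cancel_right] at g1 c1
    exact ⟨k0, g0, con_symm (c1.trans (shift g1 h))⟩

/-- The vectors of `Ψ` are roots of `L = Λ ⊕ H`, and `Ψ` is a connected set. -/
theorem stmt7 : (∀ r ∈ PsiForm, IsRoot r) ∧ ConnectedSet PsiForm := by
  constructor
  · intro r hr
    obtain ⟨l, k, h, rfl⟩ := (psi_iff r).1 hr
    exact isRoot_Q h
  · intro a ha b hb
    obtain ⟨l, k, h, rfl⟩ := (psi_iff a).1 ha
    obtain ⟨l', k', h', rfl⟩ := (psi_iff b).1 hb
    have hG : -l + l' ∈ G := leech_G (LeechG.add_mem (LeechG.neg_mem h.1) h'.1)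
    obtain ⟨k1, g1, c1⟩ := (trans_G hG).2 l k h
    rw [add_neg_cancel_left] at g1 c1
    exact c1.trans (shift g1 h')

end Bimonster
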